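/- arXiv:2605.21877 — 2 statements merged into one kernel-verified Lean document; each statement's English description precedes it below -/
import Mathlib

section
/- The 3-graph F := K4⁻ × F* is not tripartite: there is no map c from the vertex set of F to {1,2,3} such that every edge of F receives three distinct values under c. Consequently, every 3-partite 3-graph (in particular the complete balanced tripartite 3-graph S_3(n)) contains no subgraph isomorphic to F. -/
open scoped Classical

/-- A collection of finite edge sets is a 3-graph if every edge has exactly 3 vertices. -/
def IsThreeGraph {α : Type*} (H : Set (Finset α)) : Prop := ∀ e ∈ H, e.card = 3

/-- `φ` is a homomorphism of 3-graphs from `G` to `H`: the image of every edge of `G`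
is a 3-element set that is an edge of `H`. -/
def IsHomOn {α β : Type*} (G : Set (Finset α)) (H : Set (Finset β)) (φ : α → β) : Prop :=
  ∀ e ∈ G, (e.image φ).card = 3 ∧ e.image φ ∈ H

/-- `H` contains a subgraph isomorphic to `G`. -/
def ContainsCopy {α β : Type*} (G : Set (Finset α)) (H : Set (Finset β)) : Prop :=
  ∃ φ : α → β, Function.Injective φ ∧ ∀ e ∈ G, e.image φ ∈ H

/-- `K4⁻`, on vertices `a=0, b=1, c=2, d=3`, with edges `abc, abd, acd`. -/
def K4minus : Set (Finset (Fin 4)) := {{0,1,2}, {0,1,3}, {0,2,3}}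

/-- `F*`, on vertices `1,…,7` (represented by `0,…,6`), with edges `123, 124, 345, 156, 257`. -/
def Fstar : Set (Finset (Fin 7)) := {{0,1,2}, {0,1,3}, {2,3,4}, {0,4,5}, {1,4,6}}

/-- The categorical product of two 3-graphs: a 3-element set of pairs is an edge iff
its set of first coordinates is an edge of `G` and its set of second coordinates is an
edge of `H`. -/
def ProdGraph {α β : Type*} (G : Set (Finset α)) (H : Set (Finset β)) :
    Set (Finset (α × β)) :=
  {e | e.card = 3 ∧ e.image Prod.fst ∈ G ∧ e.image Prod.snd ∈ H}

/-- The 3-graph `F := K4⁻ × F*`. -/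
def F : Set (Finset (Fin 4 × Fin 7)) := ProdGraph K4minus Fstar

/-!
Colour an array whose two sides are both longer than the number of colours. Every row repeats a
colour, and two of the rows repeat the same one; among the four cells so found, two share neither
row nor column. Such a pair of cells lies in a common edge of the product, which is therefore not
coloured by three distinct colours, as soon as the two rows lie in a common edge of the first
factor and the two columns in a common edge of the second. In `K4⁻` every two of the four vertices
lie in an edge, and in `F*` every two of `1, 2, 3, 4` (here `0, 1, 2, 3`) do.
-/

section Pigeonhole

variable {α β κ : Type*} [Fintype κ]

theorem exists_ne_ne_map_eq_of_card_lt {s : Finset α} {t : Finset β}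
    (hs : Fintype.card κ < s.card) (ht : Fintype.card κ < t.card) (c : α × β → κ) :
    ∃ x ∈ s, ∃ x' ∈ s, ∃ y ∈ t, ∃ y' ∈ t, x ≠ x' ∧ y ≠ y' ∧ c (x, y) = c (x', y') := by
  have row_repeats (x : α) : ∃ y ∈ t, ∃ y' ∈ t, y ≠ y' ∧ c (x, y) = c (x, y') :=
    Finset.exists_ne_map_eq_of_card_lt_of_maps_to ht fun y _ => Finset.mem_univ (c (x, y))
  choose y hy y' hy' y_ne row_eq using row_repeats
  obtain ⟨x, hx, x', hx', x_ne, repeated_eq⟩ :=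
    Finset.exists_ne_map_eq_of_card_lt_of_maps_to hs fun x _ => Finset.mem_univ (c (x, y x))
  obtain hcol | hcol := eq_or_ne (y x) (y x')
  · exact ⟨x, hx, x', hx', y x, hy x, y' x', hy' x', x_ne, hcol ▸ y_ne x',
      repeated_eq.trans (row_eq x')⟩
  · exact ⟨x, hx, x', hx', y x, hy x, y x', hy x', x_ne, hcol, repeated_eq⟩

end Pigeonhole

section Rainbow

variable {α β κ : Type*} [DecidableEq κ]

/-- `c` is a rainbow colouring of the 3-graph `G`: every edge receives three distinct colours.
The rainbow colourings by three colours are the partitions witnessing that `G` is 3-partite. -/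
def IsRainbow (G : Set (Finset α)) (c : α → κ) : Prop := ∀ e ∈ G, (e.image c).card = 3

theorem IsRainbow.comp {G : Set (Finset α)} {H : Set (Finset β)} {c : β → κ} {φ : α → β}
    (hc : IsRainbow H c) (hφ : ∀ e ∈ G, e.image φ ∈ H) : IsRainbow G (c ∘ φ) := fun e he => by
  rw [← Finset.image_image]
  exact hc _ (hφ e he)

theorem IsRainbow.injOn {G : Set (Finset α)} {c : α → κ} (hc : IsRainbow G c)
    (hG : IsThreeGraph G) {e : Finset α} (he : e ∈ G) : Set.InjOn c e :=
  Finset.card_image_iff.mp ((hc e he).trans (hG e he).symm)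

end Rainbow

section Product

variable {α β : Type*}

theorem exists_eq_insert_pair_of_card_eq_three {e : Finset α} (he : e.card = 3) {x y : α}
    (hx : x ∈ e) (hy : y ∈ e) (hxy : x ≠ y) : ∃ z, x ≠ z ∧ y ≠ z ∧ e = {x, y, z} := by
  have hsub : {x, y} ⊆ e := by simp [Finset.insert_subset_iff, hx, hy]
  obtain ⟨z, hz⟩ : ∃ z, e \ {x, y} = {z} := by
    rw [← Finset.card_eq_one, Finset.card_sdiff_of_subset hsub, he, Finset.card_pair hxy]
  grind

theorem isThreeGraph_prodGraph (G : Set (Finset α)) (H : Set (Finset β)) :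
    IsThreeGraph (ProdGraph G H) := fun _ he => he.1

variable {G : Set (Finset α)} {H : Set (Finset β)}

theorem exists_mem_prodGraph (hG : IsThreeGraph G) (hH : IsThreeGraph H) {e : Finset α}
    {f : Finset β} (he : e ∈ G) (hf : f ∈ H) {x x' : α} {y y' : β} (hx : x ∈ e) (hx' : x' ∈ e)
    (hy : y ∈ f) (hy' : y' ∈ f) (x_ne : x ≠ x') (y_ne : y ≠ y') :
    ∃ g ∈ ProdGraph G H, (x, y) ∈ g ∧ (x', y') ∈ g := by
  obtain ⟨x'', hxx'', hx'x'', rfl⟩ :=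
    exists_eq_insert_pair_of_card_eq_three (hG e he) hx hx' x_ne
  obtain ⟨y'', -, -, rfl⟩ := exists_eq_insert_pair_of_card_eq_three (hH f hf) hy hy' y_ne
  refine ⟨{(x, y), (x', y'), (x'', y'')}, ⟨?_, ?_, ?_⟩, by simp, by simp⟩
  · exact Finset.card_eq_three.mpr ⟨_, _, _, by simp [x_ne], by simp [hxx''], by simp [hx'x''], rfl⟩
  · simpa only [Finset.image_insert, Finset.image_singleton] using he
  · simpa only [Finset.image_insert, Finset.image_singleton] using hf

/-- Every two distinct vertices of `s` lie in a common edge of `G`; equivalently, `s` is a clique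
in the shadow graph of `G`. The edge may leave `s`. -/
def CoversPairs (G : Set (Finset α)) (s : Finset α) : Prop :=
  ∀ x ∈ s, ∀ y ∈ s, x ≠ y → ∃ e ∈ G, x ∈ e ∧ y ∈ e

variable {κ : Type*} [Fintype κ] [DecidableEq κ] {s : Finset α} {t : Finset β}

theorem not_isRainbow_prodGraph (hG : IsThreeGraph G) (hH : IsThreeGraph H)
    (hGs : CoversPairs G s) (hHt : CoversPairs H t) (hs : Fintype.card κ < s.card)
    (ht : Fintype.card κ < t.card) (c : α × β → κ) : ¬ IsRainbow (ProdGraph G H) c := by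
  intro hc
  obtain ⟨x, hx, x', hx', y, hy, y', hy', x_ne, y_ne, same_colour⟩ :=
    exists_ne_ne_map_eq_of_card_lt hs ht c
  obtain ⟨e, he, hxe, hx'e⟩ := hGs x hx x' hx' x_ne
  obtain ⟨f, hf, hyf, hy'f⟩ := hHt y hy y' hy' y_ne
  obtain ⟨g, hg, hxyg, hx'y'g⟩ := exists_mem_prodGraph hG hH he hf hxe hx'e hyf hy'f x_ne y_ne
  exact x_ne (congrArg Prod.fst (hc.injOn (isThreeGraph_prodGraph G H) hg hxyg hx'y'g same_colour))

theorem F_not_tripartite_general (hG : IsThreeGraph G) (hH : IsThreeGraph H)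
    (hGs : CoversPairs G s) (hHt : CoversPairs H t) (hs : Fintype.card κ < s.card)
    (ht : Fintype.card κ < t.card) :
    (¬ ∃ c : α × β → κ, IsRainbow (ProdGraph G H) c) ∧
      ∀ (γ : Type*) (K : Set (Finset γ)),
        (∃ P : γ → κ, IsRainbow K P) → ¬ ContainsCopy (ProdGraph G H) K := by
  have not_rainbow (c : α × β → κ) := not_isRainbow_prodGraph hG hH hGs hHt hs ht c
  exact ⟨fun ⟨c, hc⟩ => not_rainbow c hc,
    fun _ _ ⟨P, hP⟩ ⟨φ, _, hφ⟩ => not_rainbow (P ∘ φ) (hP.comp hφ)⟩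

end Product

theorem isThreeGraph_K4minus : IsThreeGraph K4minus := by
  simp [IsThreeGraph, K4minus]

theorem isThreeGraph_Fstar : IsThreeGraph Fstar := by
  simp [IsThreeGraph, Fstar]

theorem coversPairs_K4minus : CoversPairs K4minus Finset.univ := by
  simp only [CoversPairs, K4minus, Set.mem_insert_iff, Set.mem_singleton_iff, exists_eq_or_imp,
    exists_eq_left]
  decide

theorem coversPairs_Fstar : CoversPairs Fstar {0, 1, 2, 3} := by
  simp only [CoversPairs, Fstar, Set.mem_insert_iff, Set.mem_singleton_iff, exists_eq_or_imp,
    exists_eq_left]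
  decide

/-- `F = K4⁻ × F*` is not tripartite, and consequently every 3-partite 3-graph
(one in which some 3-colouring of the vertices makes every edge receive three distinct
colours) contains no subgraph isomorphic to `F`. -/
theorem F_not_tripartite :
    (¬ ∃ c : Fin 4 × Fin 7 → Fin 3, ∀ e ∈ F, (e.image c).card = 3) ∧
      ∀ (β : Type) (H : Set (Finset β)), IsThreeGraph H →
        (∃ P : β → Fin 3, ∀ e ∈ H, (e.image P).card = 3) → ¬ ContainsCopy F H :=
  (F_not_tripartite_general isThreeGraph_K4minus isThreeGraph_Fstar coversPairs_K4minus
    coversPairs_Fstar (by decide) (by decide)).imp_right fun not_copy β H _ => not_copy β H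
end

section
/- Let U be a finite-dimensional 𝔽₂-vector space and let 𝒞 be a set of nonzero linear forms on U with dim_{𝔽₂} span(𝒞) ≤ 2. Then there exists a homomorphism from the cut template R(U,𝒞) to R(𝔽₂², {x, y, x+y}), where x and y are the two coordinate forms on 𝔽₂². -/
open scoped Classical

/-- The cut template `R(U, 𝒞)`: apex vertices indexed by `𝒞`, bottom vertices `U`, and
edges `{a_c, u, v}` for `c ∈ 𝒞` and distinct `u, v ∈ U` with `c (u + v) = 1`. -/
def CutTemplate (U : Type*) [AddCommGroup U] [Module (ZMod 2) U]
    (C : Set (U →ₗ[ZMod 2] ZMod 2)) : Set (Finset (↥C ⊕ U)) :=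
  {e | ∃ (c : ↥C) (u v : U), u ≠ v ∧ (c : U →ₗ[ZMod 2] ZMod 2) (u + v) = 1 ∧
      e = {Sum.inl c, Sum.inr u, Sum.inr v}}

/-- The first coordinate form `x` on `𝔽₂²`. -/
noncomputable def xForm : (ZMod 2 × ZMod 2) →ₗ[ZMod 2] ZMod 2 :=
  LinearMap.fst (ZMod 2) (ZMod 2) (ZMod 2)

/-- The second coordinate form `y` on `𝔽₂²`. -/
noncomputable def yForm : (ZMod 2 × ZMod 2) →ₗ[ZMod 2] ZMod 2 :=
  LinearMap.snd (ZMod 2) (ZMod 2) (ZMod 2)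

/-- The set of forms `{x, y, x + y}` on `𝔽₂²`. -/
noncomputable def CFull : Set ((ZMod 2 × ZMod 2) →ₗ[ZMod 2] ZMod 2) :=
  {xForm, yForm, xForm + yForm}

/-!
Generators `p, q` of `span 𝒞` form a linear map `π = (p, q) : U → 𝔽₂²`, and the forms in `span 𝒞`
are exactly the pullbacks along `π` of forms on `𝔽₂²`. If `c ∈ 𝒞` is the pullback of `d`, then
`d ≠ 0` because `c ≠ 0`, so `d` is one of `x`, `y`, `x + y`; and since `d (π u + π v) = c (u + v)`,
sending `a_c` to `a_d` and `u` to `π u` preserves edges. For a target space `V` of any dimension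
at least `dim span 𝒞`, the map given by the generators is composed with an embedding into `V`.
-/

theorem IsThreeGraph.isHomOn {α β : Type*} {G : Set (Finset α)} {H : Set (Finset β)} {φ : α → β}
    (hH : IsThreeGraph H) (hφ : ∀ e ∈ G, e.image φ ∈ H) : IsHomOn G H φ :=
  fun e he => ⟨hH _ (hφ e he), hφ e he⟩

theorem ne_of_map_add_eq_one {M R F : Type*} [Add M] [Semiring R] [CharP R 2] [Nontrivial R]
    [FunLike F M R] [AddHomClass F M R] {f : F} {u v : M} (h : f (u + v) = 1) : u ≠ v := by
  rintro rfl
  rw [map_add, CharTwo.add_self_eq_zero] at h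
  exact zero_ne_one h

section CutTemplate

variable {U V : Type*} [AddCommGroup U] [Module (ZMod 2) U] [AddCommGroup V] [Module (ZMod 2) V]
  {C : Set (U →ₗ[ZMod 2] ZMod 2)} {D : Set (V →ₗ[ZMod 2] ZMod 2)}

theorem isThreeGraph_cutTemplate (C : Set (U →ₗ[ZMod 2] ZMod 2)) :
    IsThreeGraph (CutTemplate U C) := by
  rintro _ ⟨c, u, v, huv, -, rfl⟩
  exact Finset.card_eq_three.mpr
    ⟨_, _, _, Sum.inl_ne_inr, Sum.inl_ne_inr, Sum.inr_injective.ne huv, rfl⟩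

theorem mem_cutTemplate_of_map_add_eq_one (c : C) {u v : U} (h : c.1 (u + v) = 1) :
    {Sum.inl c, Sum.inr u, Sum.inr v} ∈ CutTemplate U C :=
  ⟨c, u, v, ne_of_map_add_eq_one h, h, rfl⟩

theorem isHomOn_cutTemplate_sumMap (π : U →ₗ[ZMod 2] V) (f : C → D)
    (hf : ∀ c, π.dualMap (f c) = c) :
    IsHomOn (CutTemplate U C) (CutTemplate V D) (Sum.map f π) := by
  refine (isThreeGraph_cutTemplate D).isHomOn ?_
  rintro _ ⟨c, u, v, -, hc, rfl⟩
  have hfc : (f c).1 (π u + π v) = 1 := by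
    rw [← map_add, ← LinearMap.dualMap_apply, hf, hc]
  simp only [Finset.image_insert, Finset.image_singleton, Sum.map_inl, Sum.map_inr]
  -- `IsHomOn` and `CutTemplate` use different `DecidableEq` instances on `D ⊕ V`.
  convert mem_cutTemplate_of_map_add_eq_one (f c) hfc

end CutTemplate

theorem range_dualMap_pi {R M ι : Type*} [CommSemiring R] [AddCommMonoid M] [Module R M]
    [Finite ι] (v : ι → Module.Dual R M) :
    LinearMap.range (LinearMap.pi v).dualMap = Submodule.span R (Set.range v) := by
  have hcoord (i : ι) : (LinearMap.pi v).dualMap ((Pi.basisFun R ι).dualBasis i) = v i := by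
    ext u
    simp
  rw [LinearMap.range_eq_map, ← (Pi.basisFun R ι).dualBasis.span_eq, Submodule.map_span,
    ← Set.range_comp]
  exact congrArg (fun w => Submodule.span R (Set.range w)) (funext hcoord)

theorem exists_range_dualMap_eq_span {K U V : Type*} [Field K]
    [AddCommGroup U] [Module K U] [AddCommGroup V] [Module K V]
    (C : Set (Module.Dual K U)) [FiniteDimensional K (Submodule.span K C)]
    (hC : (Module.finrank K (Submodule.span K C) : Cardinal) ≤ Module.rank K V) :
    ∃ π : U →ₗ[K] V, LinearMap.range π.dualMap = Submodule.span K C := by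
  obtain ⟨v, -, hv, -⟩ := Submodule.exists_fun_fin_finrank_span_eq K C
  obtain ⟨j, hj⟩ := Module.le_rank_iff_exists_linearMap.mp hC
  have hj_dual : LinearMap.range j.dualMap = ⊤ :=
    LinearMap.range_eq_top.mpr (LinearMap.dualMap_surjective_of_injective hj)
  refine ⟨j ∘ₗ LinearMap.pi v, ?_⟩
  rw [← LinearMap.dualMap_comp_dualMap, LinearMap.range_comp_of_range_eq_top _ hj_dual,
    range_dualMap_pi, hv]

theorem CFull_eq_setOf_ne_zero : CFull = {d | d ≠ 0} := by
  ext d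
  have hd (f : ZMod 2 × ZMod 2 →ₗ[ZMod 2] ZMod 2) :
      d = f ↔ d (1, 0) = f (1, 0) ∧ d (0, 1) = f (0, 1) := by
    rw [LinearMap.prod_ext_iff, LinearMap.ext_ring_iff, LinearMap.ext_ring_iff]
    rfl
  simp only [CFull, xForm, yForm, Set.mem_insert_iff, Set.mem_singleton_iff, Set.mem_ofPred_eq,
    ne_eq, hd, LinearMap.fst_apply, LinearMap.snd_apply, LinearMap.add_apply, LinearMap.zero_apply]
  generalize d (1, 0) = a
  generalize d (0, 1) = b
  decide +revert

theorem hom_rank_two_cut_template_to_full_general {U V : Type*}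
    [AddCommGroup U] [Module (ZMod 2) U] [AddCommGroup V] [Module (ZMod 2) V]
    (C : Set (U →ₗ[ZMod 2] ZMod 2)) (hC : ∀ c ∈ C, c ≠ 0)
    [FiniteDimensional (ZMod 2) ↥(Submodule.span (ZMod 2) C)]
    (hrank : (Module.finrank (ZMod 2) ↥(Submodule.span (ZMod 2) C) : Cardinal) ≤
      Module.rank (ZMod 2) V) :
    ∃ φ : ↥C ⊕ U → ↥{d : V →ₗ[ZMod 2] ZMod 2 | d ≠ 0} ⊕ V,
      IsHomOn (CutTemplate U C) (CutTemplate V {d | d ≠ 0}) φ := by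
  obtain ⟨π, hπ⟩ := exists_range_dualMap_eq_span _ hrank
  have hpullback (c : C) : ∃ d : {d : V →ₗ[ZMod 2] ZMod 2 | d ≠ 0}, π.dualMap d = c := by
    obtain ⟨d, hd⟩ := hπ.ge (Submodule.subset_span c.2)
    refine ⟨⟨d, ?_⟩, hd⟩
    rintro rfl
    exact hC c c.2 (hd.symm.trans (map_zero _))
  choose f hf using hpullback
  exact ⟨Sum.map f π, isHomOn_cutTemplate_sumMap π f hf⟩

/-- If `𝒞` consists of nonzero linear forms and `dim span 𝒞 ≤ 2`, then the cut template
`R(U, 𝒞)` admits a homomorphism to `R(𝔽₂², {x, y, x+y})`. -/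
theorem hom_rank_two_cut_template_to_full (U : Type) [AddCommGroup U] [Module (ZMod 2) U]
    [FiniteDimensional (ZMod 2) U] (C : Set (U →ₗ[ZMod 2] ZMod 2))
    (hC : ∀ c ∈ C, c ≠ 0)
    (hrank : Module.finrank (ZMod 2) ↥(Submodule.span (ZMod 2) C) ≤ 2) :
    ∃ φ : ↥C ⊕ U → ↥CFull ⊕ (ZMod 2 × ZMod 2),
      IsHomOn (CutTemplate U C) (CutTemplate (ZMod 2 × ZMod 2) CFull) φ := by
  rw [CFull_eq_setOf_ne_zero]
  exact hom_rank_two_cut_template_to_full_general C hC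
    (by rw [rank_prod', Module.rank_self, one_add_one_eq_two]; exact_mod_cast hrank)
end
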